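/- For any admissible set A of addition chains, both 𝒟^A = {δ^A(n) : n a positive integer} and the set 𝒟^A_st of A-stable defects are well-ordered subsets of the real numbers, each of order type exactly ω^ω. -/

import Mathlib

/-!
The increasing map `d ↦ -2 ^ (-d)` sends the defect of `n` to the negated dyadic fraction
`-(n / 2 ^ ℓ(n))`.

If `N` of the `r` steps of a chain for `n` are not doublings, then `ν₂(n) ≤ 2 ^ N` and, by
comparison with Fibonacci growth, `n ≤ 2 ^ r * (φ / 2) ^ N`. A bound on the defect therefore bounds
`N`, hence `ν₂(n)`. The negatives of the dyadic fractions in `[0, 1]` with at most `K` binary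
digits `1` form a well-ordered set that contains no copy of `ω ^ (K + 1)`, so every proper initial
segment of the set of defects has order type below `ω ^ ω`.

Conversely, these numbers `-(t / 2 ^ l)` do contain a copy of `ω ^ K`. The defect of
`2 ^ j * (2 ^ l + t)` is an increasing function of `-(t / 2 ^ l)` up to an integer shift which is
bounded in terms of `K`. Since `ω ^ K` is not a finite union of sets of smaller order type, one
value of the shift already yields a copy of `ω ^ K` among the defects; for the stable defects, `j`
is chosen so that `2 ^ j * (2 ^ l + t)` is stable.
-/

/-- `c` is an addition chain: a nonempty list of positive integers starting at `1`
such that every later entry is the sum of two (not necessarily distinct) earlier entries. -/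
def IsAdditionChain (c : List ℕ) : Prop :=
  c.getD 0 0 = 1 ∧
    ∀ k, 0 < k → k < c.length →
      ∃ i j, i < k ∧ j < k ∧ c.getD k 0 = c.getD i 0 + c.getD j 0

/-- `c` is an addition chain whose last entry is `n`; its length is `c.length - 1`. -/
def IsAdditionChainFor (c : List ℕ) (n : ℕ) : Prop :=
  IsAdditionChain c ∧ c.getD (c.length - 1) 0 = n

/-- ν₂(n): the number of 1's in the binary expansion of `n`. -/
def binaryWeight (n : ℕ) : ℕ := (Nat.digits 2 n).sum

/-- `ℓ^A(n)`: the least length (number of steps, i.e. one less than the number of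
entries) of an addition chain for `n` belonging to the set `A` of addition chains. -/
noncomputable def chainLength (A : Set (List ℕ)) (n : ℕ) : ℕ :=
  sInf {r | ∃ c ∈ A, IsAdditionChainFor c n ∧ c.length = r + 1}

/-- A set `A` of addition chains is admissible if (i) every positive `n` has a chain
in `A` of length at most `⌊log₂ n⌋ + ν₂(n) - 1` (i.e. with at most
`⌊log₂ n⌋ + ν₂(n)` entries) and (ii) `ℓ^A(2n) ≤ ℓ^A(n) + 1` for all positive `n`. -/
def Admissible (A : Set (List ℕ)) : Prop :=
  (∀ n : ℕ, 0 < n → ∃ c ∈ A, IsAdditionChainFor c n ∧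
      c.length ≤ Nat.log 2 n + binaryWeight n) ∧
  ∀ n : ℕ, 0 < n → chainLength A (2 * n) ≤ chainLength A n + 1

/-- The A-defect `δ^A(n) = ℓ^A(n) - log₂ n`. -/
noncomputable def Adefect (A : Set (List ℕ)) (n : ℕ) : ℝ :=
  (chainLength A n : ℝ) - Real.logb 2 n

/-- `m` is A-stable if `ℓ^A(2^k m) = ℓ^A(m) + k` for all `k ≥ 0`. -/
def AStable (A : Set (List ℕ)) (m : ℕ) : Prop :=
  ∀ k : ℕ, chainLength A (2 ^ k * m) = chainLength A m + k

/-- `𝒟^A`: the set of all A-defect values. -/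
def defectSet (A : Set (List ℕ)) : Set ℝ :=
  {d | ∃ n : ℕ, 0 < n ∧ d = Adefect A n}

/-- `𝒟^A_st`: the set of all A-stable defects. -/
def stableDefectSet (A : Set (List ℕ)) : Set ℝ :=
  {d | ∃ n : ℕ, 0 < n ∧ AStable A n ∧ d = Adefect A n}

open scoped Classical in
/-- The order type of a well-ordered subset `S` of a linear order
(junk value `0` if `S` is not well-ordered, i.e. not `Set.IsWF`). -/
noncomputable def setOrderType {X : Type*} [LinearOrder X] (S : Set X) : Ordinal :=
  if h : S.IsWF then
    letI : WellFoundedLT S := ⟨h⟩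
    Ordinal.type ((· < ·) : S → S → Prop)
  else 0



section BinaryWeight

theorem binaryWeight_zero : binaryWeight 0 = 0 := by simp [binaryWeight]

theorem binaryWeight_two_pow_mul (k n : ℕ) : binaryWeight (2 ^ k * n) = binaryWeight n := by
  rcases n.eq_zero_or_pos with rfl | hn
  · simp
  · simp [binaryWeight, Nat.digits_base_pow_mul one_lt_two hn]

theorem binaryWeight_two_mul (n : ℕ) : binaryWeight (2 * n) = binaryWeight n :=
  binaryWeight_two_pow_mul 1 n

theorem binaryWeight_two_mul_add_one (n : ℕ) :
    binaryWeight (2 * n + 1) = binaryWeight n + 1 := by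
  rw [binaryWeight, add_comm, Nat.digits_add 2 one_lt_two 1 n one_lt_two (Or.inl one_ne_zero),
    List.sum_cons, add_comm, binaryWeight]

theorem binaryWeight_two_pow_add {a t : ℕ} (ht : t < 2 ^ a) :
    binaryWeight (2 ^ a + t) = binaryWeight t + 1 := by
  induction a generalizing t with
  | zero =>
    obtain rfl : t = 0 := by simpa using ht
    simp [binaryWeight]
  | succ a ih =>
    rw [pow_succ'] at ht ⊢
    rcases Nat.even_or_odd' t with ⟨m, rfl | rfl⟩
    · rw [← mul_add, binaryWeight_two_mul, binaryWeight_two_mul, ih (by lia)]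
    · rw [← add_assoc, ← mul_add, binaryWeight_two_mul_add_one, binaryWeight_two_mul_add_one,
        ih (by lia)]

theorem exists_eq_two_pow_add {n : ℕ} (hn : n ≠ 0) :
    ∃ a t, t < 2 ^ a ∧ n = 2 ^ a + t ∧ binaryWeight n = binaryWeight t + 1 := by
  have hle := Nat.pow_log_le_self 2 hn
  have hlt := Nat.lt_pow_succ_log_self one_lt_two n
  have ht : n - 2 ^ Nat.log 2 n < 2 ^ Nat.log 2 n := by lia
  have hsum : n = 2 ^ Nat.log 2 n + (n - 2 ^ Nat.log 2 n) := by lia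
  exact ⟨_, _, ht, hsum, (congrArg binaryWeight hsum).trans (binaryWeight_two_pow_add ht)⟩

theorem binaryWeight_one : binaryWeight 1 = 1 := by
  simp [binaryWeight]

-- Legendre's formula `v₂(n!) = n - ν₂(n)` turns `a! * b! ∣ (a + b)!` into subadditivity.
theorem binaryWeight_add_le (a b : ℕ) :
    binaryWeight (a + b) ≤ binaryWeight a + binaryWeight b := by
  have legendre (n : ℕ) : padicValNat 2 n.factorial + binaryWeight n = n := by
    have h := sub_one_mul_padicValNat_factorial (p := 2) n
    have := Nat.digit_sum_le 2 n
    unfold binaryWeight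
    lia
  have hval : padicValNat 2 a.factorial + padicValNat 2 b.factorial ≤
      padicValNat 2 (a + b).factorial := by
    rw [← padicValNat.mul a.factorial_ne_zero b.factorial_ne_zero]
    exact (padicValNat_dvd_iff_le (Nat.factorial_ne_zero _)).1
      (pow_padicValNat_dvd.trans (Nat.factorial_mul_factorial_dvd_factorial_add a b))
  have ha := legendre a
  have hb := legendre b
  have hab := legendre (a + b)
  lia

theorem binaryWeight_two_pow_add_le (a t : ℕ) :
    binaryWeight (2 ^ a + t) ≤ binaryWeight t + 1 := by
  have hpow : binaryWeight (2 ^ a) = 1 := by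
    rw [← mul_one (2 ^ a), binaryWeight_two_pow_mul, binaryWeight_one]
  have hadd := binaryWeight_add_le (2 ^ a) t
  lia

end BinaryWeight

section Chains

open Real
open scoped goldenRatio

variable {c : List ℕ} {k : ℕ}

open Classical in
/-- The number of steps `1, …, k` of the chain `c` that do not double an earlier entry. -/
noncomputable def nonDoublings (c : List ℕ) : ℕ → ℕ :=
  Nat.count fun k => ∀ i ≤ k, c.getD (k + 1) 0 ≠ 2 * c.getD i 0

theorem nonDoublings_monotone (c : List ℕ) : Monotone (nonDoublings c) :=
  Nat.count_monotone _

theorem nonDoublings_succ_le (c : List ℕ) (k : ℕ) :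
    nonDoublings c (k + 1) ≤ nonDoublings c k + 1 := by
  unfold nonDoublings
  rw [Nat.count_succ]
  split_ifs <;> lia

theorem IsAdditionChain.doubling_or_nonDoubling (hc : IsAdditionChain c)
    (hk : k + 1 < c.length) :
    (nonDoublings c (k + 1) = nonDoublings c k ∧
      ∃ i ≤ k, c.getD (k + 1) 0 = 2 * c.getD i 0) ∨
    (nonDoublings c (k + 1) = nonDoublings c k + 1 ∧
      ∃ i j, i < j ∧ j ≤ k ∧ c.getD (k + 1) 0 = c.getD i 0 + c.getD j 0) := by
  unfold nonDoublings
  rw [Nat.count_succ]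
  split_ifs with h
  · obtain ⟨i, j, hi, hj, hij⟩ := hc.2 (k + 1) k.succ_pos hk
    refine Or.inr ⟨rfl, ?_⟩
    rcases lt_trichotomy i j with hlt | rfl | hgt
    · exact ⟨i, j, hlt, by lia, hij⟩
    · exact absurd (hij.trans (two_mul _).symm) (h i (by lia))
    · exact ⟨j, i, hgt, by lia, hij.trans (add_comm _ _)⟩
  · push Not at h
    exact Or.inl ⟨rfl, h⟩

/-- The bound `2 ^ k * (φ / 2) ^ N` on the entry reached after `k` steps, `N` of which are not
doublings: a doubling multiplies it by `2`, any other step by the golden ratio `φ`. -/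
noncomputable def sizeBound (c : List ℕ) (k : ℕ) : ℝ :=
  2 ^ k * (φ / 2) ^ nonDoublings c k

theorem sizeBound_pos (c : List ℕ) (k : ℕ) : 0 < sizeBound c k := by
  have := goldenRatio_pos
  unfold sizeBound
  positivity

theorem sizeBound_succ_of_eq (h : nonDoublings c (k + 1) = nonDoublings c k) :
    sizeBound c (k + 1) = 2 * sizeBound c k := by
  rw [sizeBound, sizeBound, h]
  ring

theorem sizeBound_succ_of_eq_succ (h : nonDoublings c (k + 1) = nonDoublings c k + 1) :
    sizeBound c (k + 1) = φ * sizeBound c k := by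
  rw [sizeBound, sizeBound, h]
  ring

theorem goldenRatio_mul_sizeBound_le (c : List ℕ) (k : ℕ) :
    φ * sizeBound c k ≤ sizeBound c (k + 1) := by
  have hmono := nonDoublings_monotone c k.le_succ
  rcases hmono.eq_or_lt with h | h
  · rw [sizeBound_succ_of_eq h.symm]
    exact mul_le_mul_of_nonneg_right goldenRatio_lt_two.le (sizeBound_pos c k).le
  · exact (sizeBound_succ_of_eq_succ (le_antisymm (nonDoublings_succ_le c k) h)).ge

theorem sizeBound_monotone (c : List ℕ) : Monotone (sizeBound c) :=
  monotone_nat_of_le_succ fun k =>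
    (le_mul_of_one_le_left (sizeBound_pos c k).le one_lt_goldenRatio.le).trans
      (goldenRatio_mul_sizeBound_le c k)

theorem IsAdditionChain.getD_le_sizeBound (hc : IsAdditionChain c) (hk : k < c.length) :
    (c.getD k 0 : ℝ) ≤ sizeBound c k := by
  induction k using Nat.strong_induction_on with
  | _ k ih =>
  rcases k with _ | k
  · rw [hc.1]
    simp [sizeBound, nonDoublings]
  rcases hc.doubling_or_nonDoubling hk with ⟨hN, i, hi, hsum⟩ | ⟨hN, i, j, hij, hj, hsum⟩
  · rw [sizeBound_succ_of_eq hN, hsum, Nat.cast_mul, Nat.cast_two]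
    gcongr
    exact (ih i (by lia) (by lia)).trans (sizeBound_monotone c hi)
  · rw [sizeBound_succ_of_eq_succ hN, hsum, Nat.cast_add]
    have hBj : sizeBound c j ≤ sizeBound c k := sizeBound_monotone c hj
    have hBi : φ * sizeBound c i ≤ sizeBound c k :=
      (goldenRatio_mul_sizeBound_le c i).trans (sizeBound_monotone c (by lia : i + 1 ≤ k))
    refine le_of_mul_le_mul_left ?_ goldenRatio_pos
    calc φ * (c.getD i 0 + c.getD j 0)
        ≤ φ * (sizeBound c i + sizeBound c j) := by
          have := goldenRatio_pos
          gcongr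
          exacts [ih i (by lia) (by lia), ih j (by lia) (by lia)]
      _ ≤ (φ + 1) * sizeBound c k := by
          rw [mul_add, add_comm, add_mul, one_mul]
          have := goldenRatio_pos
          gcongr
      _ = φ * (φ * sizeBound c k) := by rw [← goldenRatio_sq]; ring

theorem IsAdditionChain.binaryWeight_getD_le (hc : IsAdditionChain c) (hk : k < c.length) :
    binaryWeight (c.getD k 0) ≤ 2 ^ nonDoublings c k := by
  induction k using Nat.strong_induction_on with
  | _ k ih =>
  rcases k with _ | k
  · rw [hc.1, binaryWeight_one]
    exact Nat.one_le_two_pow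
  have hle {i : ℕ} (hi : i ≤ k) : binaryWeight (c.getD i 0) ≤ 2 ^ nonDoublings c k :=
    (ih i (by lia) (by lia)).trans
      (Nat.pow_le_pow_right two_pos (nonDoublings_monotone c hi))
  rcases hc.doubling_or_nonDoubling hk with ⟨hN, i, hi, hsum⟩ | ⟨hN, i, j, hij, hj, hsum⟩
  · rw [hN, hsum, binaryWeight_two_mul]
    exact hle hi
  · rw [hN, hsum, pow_succ, mul_two]
    exact (binaryWeight_add_le _ _).trans (add_le_add (hle (hij.le.trans hj)) (hle hj))

end Chains

section ChainLength

open Real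
open scoped goldenRatio

variable {A : Set (List ℕ)} {c : List ℕ} {n : ℕ}

/-- Every positive integer has a chain in `A`, so that `chainLength A` takes no junk value. -/
def HasChains (A : Set (List ℕ)) : Prop :=
  ∀ n : ℕ, 0 < n → ∃ c ∈ A, IsAdditionChainFor c n

/-- The weakening of condition (i) of admissibility in which the summand `ν₂(n)` of the bound is
replaced by an arbitrary function of `ν₂(n)`. -/
def HasShortChains (A : Set (List ℕ)) : Prop :=
  ∃ f : ℕ → ℕ, ∀ n : ℕ, 0 < n → ∃ c ∈ A, IsAdditionChainFor c n ∧
    c.length ≤ Nat.log 2 n + f (binaryWeight n)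

theorem HasShortChains.hasChains (hA : HasShortChains A) : HasChains A := by
  obtain ⟨_, hf⟩ := hA
  intro n hn
  obtain ⟨c, hcA, hc, _⟩ := hf n hn
  exact ⟨c, hcA, hc⟩

theorem Admissible.hasShortChains (hA : Admissible A) : HasShortChains A :=
  ⟨id, hA.1⟩

theorem IsAdditionChain.length_pos (hc : IsAdditionChain c) : 0 < c.length := by
  rw [List.length_pos_iff]
  rintro rfl
  simpa using hc.1

theorem chainLength_lt_length (hcA : c ∈ A) (hc : IsAdditionChainFor c n) :
    chainLength A n < c.length := by
  have hpos := hc.1.length_pos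
  have hle : chainLength A n ≤ c.length - 1 := Nat.sInf_le ⟨c, hcA, hc, by lia⟩
  lia

theorem exists_length_eq_chainLength_add_one (h : ∃ c ∈ A, IsAdditionChainFor c n) :
    ∃ c ∈ A, IsAdditionChainFor c n ∧ c.length = chainLength A n + 1 := by
  obtain ⟨c, hcA, hc⟩ := h
  have hpos := hc.1.length_pos
  exact Nat.sInf_mem (s := {r | ∃ c ∈ A, IsAdditionChainFor c n ∧ c.length = r + 1})
    ⟨c.length - 1, c, hcA, hc, by lia⟩

theorem exists_le_pow_chainLength_mul_and_binaryWeight_le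
    (h : ∃ c ∈ A, IsAdditionChainFor c n) :
    ∃ N : ℕ, (n : ℝ) ≤ 2 ^ chainLength A n * (φ / 2) ^ N ∧ binaryWeight n ≤ 2 ^ N := by
  obtain ⟨c, -, ⟨hc, hlast⟩, hlen⟩ := exists_length_eq_chainLength_add_one h
  rw [hlen, Nat.add_sub_cancel] at hlast
  have hk : chainLength A n < c.length := by lia
  refine ⟨nonDoublings c (chainLength A n), ?_, ?_⟩
  · simpa only [hlast, sizeBound] using hc.getD_le_sizeBound hk
  · simpa only [hlast] using hc.binaryWeight_getD_le hk

theorem le_two_pow_chainLength (h : ∃ c ∈ A, IsAdditionChainFor c n) :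
    n ≤ 2 ^ chainLength A n := by
  obtain ⟨N, hN, -⟩ := exists_le_pow_chainLength_mul_and_binaryWeight_le h
  have hpow : (φ / 2) ^ N ≤ 1 :=
    pow_le_one₀ (half_pos goldenRatio_pos).le (by linarith [goldenRatio_lt_two])
  exact_mod_cast hN.trans (mul_le_of_le_one_right (by positivity) hpow)

theorem le_chainLength_of_two_pow_le (h : ∃ c ∈ A, IsAdditionChainFor c n) {k : ℕ}
    (hk : 2 ^ k ≤ n) : k ≤ chainLength A n :=
  (Nat.pow_le_pow_iff_right one_lt_two).1 (hk.trans (le_two_pow_chainLength h))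

theorem chainLength_two_pow_mul_le
    (hA : ∀ n : ℕ, 0 < n → chainLength A (2 * n) ≤ chainLength A n + 1) (hn : 0 < n) (k : ℕ) :
    chainLength A (2 ^ k * n) ≤ chainLength A n + k := by
  induction k with
  | zero => simp
  | succ k ih =>
    have hstep := hA (2 ^ k * n) (by positivity)
    rw [pow_succ', mul_assoc]
    lia

-- `2 ^ j * n` is stable as soon as `j` minimizes `ℓ(2 ^ j * n) - j`, which is never negative.
theorem exists_aStable_two_pow_mul (hA : HasChains A)
    (hdouble : ∀ n : ℕ, 0 < n → chainLength A (2 * n) ≤ chainLength A n + 1) (hn : 0 < n) :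
    ∃ j, AStable A (2 ^ j * n) := by
  have hpos (j : ℕ) : 0 < 2 ^ j * n := by positivity
  have hge (j : ℕ) : j ≤ chainLength A (2 ^ j * n) :=
    le_chainLength_of_two_pow_le (hA _ (hpos j)) (Nat.le_mul_of_pos_right _ hn)
  have hmin := Function.argmin_le fun i => chainLength A (2 ^ i * n) - i
  set j := Function.argmin fun i => chainLength A (2 ^ i * n) - i
  refine ⟨j, fun k => le_antisymm (chainLength_two_pow_mul_le hdouble (hpos j) k) ?_⟩
  have hjk := hmin (k + j)
  have hj := hge j
  have hkj := hge (k + j)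
  rw [pow_add, mul_assoc] at hjk hkj
  lia

end ChainLength

section OmegaPow

open Ordinal

universe u

/-- `S` contains a copy of `ω ^ k`: a copy of `ω ^ (k + 1)` is an increasing sequence of copies
of `ω ^ k`. For well-ordered `S` this is `ω ^ k ≤ setOrderType S`, but the recursive form makes
the indecomposability of `ω ^ k` under finite unions an easy induction. -/
def HasOmegaPow {X : Type*} [Preorder X] : ℕ → Set X → Prop
  | 0, S => S.Nonempty
  | k + 1, S => ∃ T : ℕ → Set X, (∀ i, T i ⊆ S ∧ HasOmegaPow k (T i)) ∧
      ∀ i j, i < j → ∀ x ∈ T i, ∀ y ∈ T j, x < y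

namespace HasOmegaPow

section Preorder

variable {X : Type*} [Preorder X] {k : ℕ} {S S' : Set X}

theorem mono (h : HasOmegaPow k S) (hS : S ⊆ S') : HasOmegaPow k S' := by
  cases k with
  | zero => exact Set.Nonempty.mono hS h
  | succ k =>
    obtain ⟨T, hT, hlt⟩ := h
    exact ⟨T, fun i => ⟨(hT i).1.trans hS, (hT i).2⟩, hlt⟩

theorem nonempty (h : HasOmegaPow k S) : S.Nonempty := by
  induction k generalizing S with
  | zero => exact h
  | succ k ih =>
    obtain ⟨T, hT, -⟩ := h
    exact (ih (hT 0).2).mono (hT 0).1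

theorem of_union {B C : Set X} (h : HasOmegaPow k (B ∪ C)) :
    HasOmegaPow k B ∨ HasOmegaPow k C := by
  induction k generalizing B C with
  | zero => exact Set.union_nonempty.1 h
  | succ k ih =>
    obtain ⟨T, hT, hlt⟩ := h
    have hmem (i : ℕ) :
        i ∈ {i | HasOmegaPow k (T i ∩ B)} ∪ {i | HasOmegaPow k (T i ∩ C)} := by
      refine ih ?_
      rw [← Set.inter_union_distrib_left, Set.inter_eq_left.2 (hT i).1]
      exact (hT i).2
    obtain ⟨g, hg | hg⟩ := Nat.exists_subseq_of_forall_mem_union id hmem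
    · exact Or.inl ⟨fun i => T (g i) ∩ B, fun i => ⟨Set.inter_subset_right, hg i⟩,
        fun i j hij x hx y hy => hlt _ _ (g.lt_iff_lt.2 hij) x hx.1 y hy.1⟩
    · exact Or.inr ⟨fun i => T (g i) ∩ C, fun i => ⟨Set.inter_subset_right, hg i⟩,
        fun i j hij x hx y hy => hlt _ _ (g.lt_iff_lt.2 hij) x hx.1 y hy.1⟩

theorem exists_of_biUnion {ι : Type*} {s : Finset ι} {B : ι → Set X}
    (h : HasOmegaPow k (⋃ i ∈ s, B i)) : ∃ i ∈ s, HasOmegaPow k (B i) := by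
  classical
  induction s using Finset.induction_on with
  | empty => simpa using h.nonempty
  | insert a s _ ih =>
    rw [Finset.set_biUnion_insert] at h
    rcases h.of_union with ha | hs
    · exact ⟨a, Finset.mem_insert_self a s, ha⟩
    · obtain ⟨i, hi, hBi⟩ := ih hs
      exact ⟨i, Finset.mem_insert_of_mem hi, hBi⟩

end Preorder

theorem image_iff {X Y : Type*} [LinearOrder X] [Preorder Y] {k : ℕ} {S : Set X} {f : X → Y}
    (hf : StrictMonoOn f S) : HasOmegaPow k (f '' S) ↔ HasOmegaPow k S := by
  induction k generalizing S with
  | zero => exact Set.image_nonempty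
  | succ k ih =>
    constructor
    · rintro ⟨T, hT, hlt⟩
      refine ⟨fun i => S ∩ f ⁻¹' T i, fun i => ⟨Set.inter_subset_left, ?_⟩, ?_⟩
      · rw [← ih (hf.mono Set.inter_subset_left), Set.image_inter_preimage,
          Set.inter_eq_right.2 (hT i).1]
        exact (hT i).2
      · rintro i j hij x ⟨hxS, hx⟩ y ⟨hyS, hy⟩
        exact (hf.lt_iff_lt hxS hyS).1 (hlt i j hij _ hx _ hy)
    · rintro ⟨T, hT, hlt⟩
      refine ⟨fun i => f '' T i,
        fun i => ⟨Set.image_mono (hT i).1, (ih (hf.mono (hT i).1)).2 (hT i).2⟩, ?_⟩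
      rintro i j hij _ ⟨x, hx, rfl⟩ _ ⟨y, hy, rfl⟩
      exact hf ((hT i).1 hx) ((hT j).1 hy) (hlt i j hij x hx y hy)

end HasOmegaPow

section OrderType

variable {X : Type u} [LinearOrder X] {k : ℕ} {S : Set X}

theorem setOrderType_eq_type (S : Set X) [h : WellFoundedLT S] : setOrderType S = typeLT S :=
  dif_pos h.wf

theorem type_le_setOrderType_iff {α : Type u} {r : α → α → Prop} [IsWellOrder α r]
    (hS : S.IsWF) :
    type r ≤ setOrderType S ↔ ∃ f : α → X, (∀ a b, r a b → f a < f b) ∧ ∀ a, f a ∈ S := by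
  have : WellFoundedLT S := ⟨hS⟩
  rw [setOrderType_eq_type, type_le_iff']
  constructor
  · rintro ⟨e⟩
    exact ⟨fun a => e a, fun _ _ hab => e.map_rel_iff.2 hab, fun a => (e a).2⟩
  · rintro ⟨f, hf, hfS⟩
    exact ⟨RelEmbedding.ofMonotone (fun a => ⟨f a, hfS a⟩) hf⟩

theorem type_prodLex_nat {α : Type u} (r : α → α → Prop) [IsWellOrder α r] :
    type (Prod.Lex ((· < ·) : ℕ → ℕ → Prop) r) = type r * ω := by
  have e : Prod.Lex ((· < ·) : ULift.{u} ℕ → ULift.{u} ℕ → Prop) r ≃r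
      Prod.Lex ((· < ·) : ℕ → ℕ → Prop) r :=
    RelIso.prodLexCongr ⟨Equiv.ulift, Iff.rfl⟩ (RelIso.refl r)
  rw [← e.ordinalType_congr, type_prod_lex]
  simp

theorem hasOmegaPow_iff_le_setOrderType (hS : S.IsWF) :
    HasOmegaPow k S ↔ ω ^ k ≤ setOrderType S := by
  induction k generalizing S with
  | zero =>
    have : WellFoundedLT S := ⟨hS⟩
    rw [pow_zero, Order.one_le_iff_ne_zero, setOrderType_eq_type, type_ne_zero_iff_nonempty,
      Set.nonempty_coe_sort]
    rfl
  | succ k ih =>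
    have ih' {T : Set X} (hT : T.IsWF) : HasOmegaPow k T ↔
        ∃ f : (ω ^ k : Ordinal.{u}).ToType → X, (∀ a b, a < b → f a < f b) ∧ ∀ a, f a ∈ T := by
      rw [ih hT, ← type_le_setOrderType_iff hT, type_toType]
    rw [pow_succ, ← type_toType (ω ^ k), ← type_prodLex_nat, type_le_setOrderType_iff hS]
    constructor
    · rintro ⟨T, hT, hlt⟩
      choose f hf hfT using fun i => (ih' (hS.mono (hT i).1)).1 (hT i).2
      refine ⟨fun p => f p.1 p.2, ?_, fun p => (hT p.1).1 (hfT p.1 p.2)⟩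
      rintro _ _ (⟨a, b, hij⟩ | ⟨i, hab⟩)
      · exact hlt _ _ hij _ (hfT _ a) _ (hfT _ b)
      · exact hf i _ _ hab
    · rintro ⟨f, hf, hfS⟩
      have hsub (i : ℕ) : Set.range (fun a => f (i, a)) ⊆ S := by
        rintro _ ⟨a, rfl⟩
        exact hfS _
      refine ⟨fun i => Set.range fun a => f (i, a), fun i => ⟨hsub i, ?_⟩, ?_⟩
      · exact (ih' (hS.mono (hsub i))).2
          ⟨fun a => f (i, a), fun _ _ hab => hf _ _ (Prod.Lex.right i hab), fun a => ⟨a, rfl⟩⟩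
      · rintro i j hij _ ⟨a, rfl⟩ _ ⟨b, rfl⟩
        exact hf _ _ (Prod.Lex.left a b hij)

theorem exists_setOrderType_inter_Iio_eq (hS : S.IsWF) {o : Ordinal.{u}}
    (ho : o < setOrderType S) : ∃ d ∈ S, setOrderType (S ∩ Set.Iio d) = o := by
  have : WellFoundedLT S := ⟨hS⟩
  rw [setOrderType_eq_type] at ho
  obtain ⟨d, rfl⟩ := typein_surj (· < ·) ho
  refine ⟨d, d.2, ?_⟩
  have : WellFoundedLT ↥(S ∩ Set.Iio (d : X)) := ⟨hS.mono Set.inter_subset_left⟩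
  rw [setOrderType_eq_type, ← type_subrel]
  exact RelIso.ordinalType_congr
    ⟨(Equiv.subtypeSubtypeEquivSubtypeInter (· ∈ S) (· < (d : X))).symm, Iff.rfl⟩

theorem setOrderType_eq_omega_pow_omega (hS : S.IsWF) (hlower : ∀ k, HasOmegaPow k S)
    (hupper : ∀ d ∈ S, ∃ k, ¬HasOmegaPow k (S ∩ Set.Iio d)) : setOrderType S = ω ^ ω := by
  apply le_antisymm
  · refine le_of_forall_lt fun o ho => ?_
    obtain ⟨d, hd, rfl⟩ := exists_setOrderType_inter_Iio_eq hS ho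
    obtain ⟨k, hk⟩ := hupper d hd
    rw [hasOmegaPow_iff_le_setOrderType (hS.mono Set.inter_subset_left), not_le] at hk
    refine hk.trans ?_
    rw [← opow_natCast]
    exact (opow_lt_opow_iff_right one_lt_omega0).2 (natCast_lt_omega0 k)
  · rw [opow_le_of_isSuccLimit omega0_ne_zero isSuccLimit_omega0]
    intro b hb
    obtain ⟨n, rfl⟩ := lt_omega0.1 hb
    rw [opow_natCast]
    exact (hasOmegaPow_iff_le_setOrderType hS).1 (hlower n)

end OrderType

end OmegaPow

section Dyadic

open scoped Pointwise

variable {K : ℕ} {x y : ℝ}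

/-- The negatives of the dyadic fractions in `[0, 1]` with at most `K` binary digits `1`. -/
def negDyadic (K : ℕ) : Set ℝ :=
  {x | ∃ n l : ℕ, n ≤ 2 ^ l ∧ binaryWeight n ≤ K ∧ x = -(n / 2 ^ l)}

theorem negDyadic_subset_Icc (K : ℕ) : negDyadic K ⊆ Set.Icc (-1) 0 := by
  rintro _ ⟨n, l, hn, -, rfl⟩
  have hle : (n : ℝ) / 2 ^ l ≤ 1 := div_le_one_of_le₀ (by exact_mod_cast hn) (by positivity)
  exact ⟨neg_le_neg hle, neg_nonpos.2 (by positivity)⟩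

theorem negDyadic_zero_subset : negDyadic 0 ⊆ {0} := by
  rintro _ ⟨n, l, -, hw, rfl⟩
  rcases eq_or_ne n 0 with rfl | hn
  · simp
  · obtain ⟨a, t, -, -, hnt⟩ := exists_eq_two_pow_add hn
    lia

theorem exists_eq_add_of_mem_negDyadic_succ (hx : x ∈ negDyadic (K + 1)) (hx0 : x ≠ 0) :
    ∃ b : ℕ, ∃ y ∈ negDyadic K, -(1 / 2 : ℝ) ^ b + y = x ∧ -x ≤ 2 * (1 / 2 : ℝ) ^ b := by
  obtain ⟨n, l, hnl, hw, rfl⟩ := hx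
  have hn : n ≠ 0 := by
    rintro rfl
    simp at hx0
  obtain ⟨a, t, hta, hsum, hwt⟩ := exists_eq_two_pow_add hn
  obtain ⟨b, rfl⟩ := Nat.exists_eq_add_of_le <|
    (Nat.pow_le_pow_iff_right (a := 2) one_lt_two).1 (show 2 ^ a ≤ 2 ^ l by lia)
  have hb : (1 / 2 : ℝ) ^ b = 2 ^ a / 2 ^ (a + b) := by
    rw [pow_add, one_div, inv_pow]
    field_simp
  have hcast : (n : ℝ) = 2 ^ a + t := by exact_mod_cast hsum
  refine ⟨b, -(t / 2 ^ (a + b)), ⟨t, a + b, by lia, by lia, rfl⟩, ?_, ?_⟩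
  · rw [hb, hcast]
    ring
  · have hta' : (t : ℝ) ≤ 2 ^ a := by exact_mod_cast hta.le
    rw [neg_neg, hb, hcast, mul_div_assoc']
    gcongr
    linarith

theorem negDyadic_isPWO (K : ℕ) : (negDyadic K).IsPWO := by
  induction K with
  | zero => exact (Set.isPWO_singleton 0).mono negDyadic_zero_subset
  | succ K ih =>
    have hmono : Monotone fun b : ℕ => -(1 / 2 : ℝ) ^ b := fun _ _ hab =>
      neg_le_neg (pow_le_pow_of_le_one (by norm_num) (by norm_num) hab)
    have hrange : (Set.range fun b : ℕ => -(1 / 2 : ℝ) ^ b).IsPWO := by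
      rw [← Set.image_univ]
      exact (Set.IsPWO.of_linearOrder Set.univ).image_of_monotone hmono
    refine ((Set.isPWO_singleton 0).union (hrange.add ih)).mono fun x hx => ?_
    rcases eq_or_ne x 0 with hx0 | hx0
    · exact Or.inl hx0
    · obtain ⟨b, y, hy, hxy, -⟩ := exists_eq_add_of_mem_negDyadic_succ hx hx0
      exact Or.inr ⟨_, ⟨b, rfl⟩, y, hy, hxy⟩

theorem exists_negDyadic_succ_inter_Iio_subset (K : ℕ) (hy : y < 0) :
    ∃ B : ℕ, negDyadic (K + 1) ∩ Set.Iio y ⊆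
      ⋃ b ∈ Finset.range B, (fun x => -(1 / 2 : ℝ) ^ b + x) '' negDyadic K := by
  obtain ⟨B, hB⟩ := exists_pow_lt_of_lt_one (show 0 < -y / 2 by linarith)
    (show (1 / 2 : ℝ) < 1 by norm_num)
  refine ⟨B, fun x ⟨hx, hxy⟩ => ?_⟩
  rw [Set.mem_Iio] at hxy
  obtain ⟨b, u, hu, hxu, hle⟩ := exists_eq_add_of_mem_negDyadic_succ hx (by linarith)
  have hpow : (1 / 2 : ℝ) ^ B < (1 / 2 : ℝ) ^ b := by linarith
  have hb : b < B :=
    (pow_lt_pow_iff_right_of_lt_one₀ (by norm_num) (by norm_num)).1 hpow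
  exact Set.mem_biUnion (Finset.mem_coe.2 (Finset.mem_range.2 hb)) ⟨u, hu, hxu⟩

theorem not_hasOmegaPow_succ_negDyadic (K : ℕ) : ¬HasOmegaPow (K + 1) (negDyadic K) := by
  induction K with
  | zero =>
    rintro ⟨T, hT, hlt⟩
    obtain ⟨x, hx⟩ := (hT 0).2
    obtain ⟨y, hy⟩ := (hT 1).2
    have hxy := hlt 0 1 one_pos x hx y hy
    rw [negDyadic_zero_subset ((hT 0).1 hx), negDyadic_zero_subset ((hT 1).1 hy)] at hxy
    exact lt_irrefl _ hxy
  | succ K ih =>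
    rintro ⟨T, hT, hlt⟩
    obtain ⟨y, hy⟩ := (hT 1).2.nonempty
    obtain ⟨z, hz⟩ := (hT 2).2.nonempty
    have hy0 : y < 0 :=
      (hlt 1 2 one_lt_two y hy z hz).trans_le (negDyadic_subset_Icc _ ((hT 2).1 hz)).2
    obtain ⟨B, hB⟩ := exists_negDyadic_succ_inter_Iio_subset K hy0
    have hT0 : T 0 ⊆ negDyadic (K + 1) ∩ Set.Iio y :=
      fun x hx => ⟨(hT 0).1 hx, hlt 0 1 one_pos x hx y hy⟩
    obtain ⟨b, -, hb⟩ := ((hT 0).2.mono (hT0.trans hB)).exists_of_biUnion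
    exact ih ((HasOmegaPow.image_iff ((strictMono_id.const_add _).strictMonoOn _)).1 hb)

theorem image_sub_one_negDyadic_subset (K i : ℕ) :
    (fun x => (1 / 4 : ℝ) ^ (i + 1) * (x - 1)) '' negDyadic K ⊆ negDyadic (K + 1) := by
  rintro _ ⟨_, ⟨n, l, hn, hw, rfl⟩, rfl⟩
  refine ⟨2 ^ l + n, l + 2 * (i + 1), ?_, ?_, ?_⟩
  · calc 2 ^ l + n ≤ 2 ^ l * 2 ^ 1 := by lia
      _ ≤ 2 ^ l * 2 ^ (2 * (i + 1)) := by gcongr <;> lia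
      _ = 2 ^ (l + 2 * (i + 1)) := (pow_add 2 l _).symm
  · exact (binaryWeight_two_pow_add_le l n).trans (Nat.add_le_add_right hw 1)
  · have h4 : (2 : ℝ) ^ (2 * (i + 1)) = 4 ^ (i + 1) := by
      rw [pow_mul]
      norm_num
    push_cast
    rw [pow_add 2 l, h4, one_div, inv_pow]
    field_simp
    ring

-- The copies `4⁻⁽ⁱ⁺¹⁾ (negDyadic K - 1)` lie in the disjoint intervals `4⁻⁽ⁱ⁺¹⁾ [-2, -1]`.
theorem hasOmegaPow_negDyadic (K : ℕ) : HasOmegaPow K (negDyadic K) := by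
  induction K with
  | zero => exact ⟨0, 0, 0, Nat.zero_le _, binaryWeight_zero.le, by simp⟩
  | succ K ih =>
    refine ⟨fun i => (fun x => (1 / 4 : ℝ) ^ (i + 1) * (x - 1)) '' negDyadic K,
      fun i => ⟨image_sub_one_negDyadic_subset K i, ?_⟩, ?_⟩
    · refine (HasOmegaPow.image_iff (StrictMono.strictMonoOn (fun x y hxy => ?_) _)).2 ih
      gcongr
    · rintro i j hij _ ⟨x, hx, rfl⟩ _ ⟨y, hy, rfl⟩
      have hx0 := (negDyadic_subset_Icc K hx).2
      have hy1 := (negDyadic_subset_Icc K hy).1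
      calc (1 / 4 : ℝ) ^ (i + 1) * (x - 1)
          ≤ -(1 / 4 : ℝ) ^ (i + 1) := by
            nlinarith [show (0 : ℝ) < (1 / 4) ^ (i + 1) by positivity]
        _ < -(1 / 4 : ℝ) ^ (i + 1) / 2 := by
            linarith [show (0 : ℝ) < (1 / 4) ^ (i + 1) by positivity]
        _ = (1 / 4 : ℝ) ^ (i + 2) * -2 := by ring
        _ ≤ (1 / 4 : ℝ) ^ (j + 1) * -2 := by
            have := pow_le_pow_of_le_one (show (0 : ℝ) ≤ 1 / 4 by norm_num) (by norm_num)
              (show i + 2 ≤ j + 1 by lia)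
            linarith
        _ ≤ (1 / 4 : ℝ) ^ (j + 1) * (y - 1) := by
            gcongr
            linarith

end Dyadic

section Defects

open Real Ordinal
open scoped goldenRatio

variable {A : Set (List ℕ)}

/-- The increasing map `d ↦ -2 ^ (-d)`, which turns the defect of `n` into the negated dyadic
fraction `-(n / 2 ^ ℓ(n))`. -/
noncomputable def defectToDyadic (d : ℝ) : ℝ :=
  -2 ^ (-d)

theorem defectToDyadic_strictMono : StrictMono defectToDyadic := fun _ _ hab =>
  neg_lt_neg (rpow_lt_rpow_of_exponent_lt one_lt_two (neg_lt_neg hab))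

theorem defectToDyadic_sub_logb {n : ℕ} (hn : 0 < n) (r : ℕ) :
    defectToDyadic (r - logb 2 n) = -(n / 2 ^ r) := by
  rw [defectToDyadic, neg_sub, rpow_sub two_pos,
    rpow_logb two_pos (by norm_num) (by exact_mod_cast hn), rpow_natCast]

theorem exists_forall_binaryWeight_le_of_Adefect_lt (hA : HasChains A) (d : ℝ) :
    ∃ K, ∀ n : ℕ, 0 < n → Adefect A n < d → binaryWeight n ≤ K := by
  have hφ1 : φ / 2 < 1 := by linarith [goldenRatio_lt_two]
  obtain ⟨M, hM⟩ := exists_pow_lt_of_lt_one (show (0 : ℝ) < 2 ^ (-d) by positivity) hφ1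
  refine ⟨2 ^ M, fun n hn hd => ?_⟩
  obtain ⟨N, hsize, hweight⟩ := exists_le_pow_chainLength_mul_and_binaryWeight_le (hA n hn)
  have hd' := defectToDyadic_strictMono hd
  rw [Adefect, defectToDyadic_sub_logb hn, defectToDyadic, neg_lt_neg_iff] at hd'
  have hpow : (φ / 2) ^ M < (φ / 2) ^ N := by
    refine (hM.trans hd').trans_le ?_
    rwa [div_le_iff₀' (by positivity)]
  have hNM : N < M := (pow_lt_pow_iff_right_of_lt_one₀ (half_pos goldenRatio_pos) hφ1).1 hpow
  exact hweight.trans (Nat.pow_le_pow_right two_pos hNM.le)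

theorem exists_image_defectToDyadic_subset (hA : HasChains A) (d : ℝ) :
    ∃ K, defectToDyadic '' (defectSet A ∩ Set.Iio d) ⊆ negDyadic K := by
  obtain ⟨K, hK⟩ := exists_forall_binaryWeight_le_of_Adefect_lt hA d
  refine ⟨K, ?_⟩
  rintro _ ⟨_, ⟨⟨n, hn, rfl⟩, hd⟩, rfl⟩
  exact ⟨n, chainLength A n, le_two_pow_chainLength (hA n hn), hK n hn hd,
    defectToDyadic_sub_logb hn _⟩

theorem defectSet_isWF (hA : HasChains A) : (defectSet A).IsWF := by
  rw [Set.isWF_iff_no_descending_seq]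
  intro f hf hmem
  obtain ⟨K, hK⟩ := exists_image_defectToDyadic_subset hA (f 0)
  refine Set.isWF_iff_no_descending_seq.1 (negDyadic_isPWO K).isWF
    (fun i => defectToDyadic (f (i + 1)))
    (fun i j hij => defectToDyadic_strictMono (hf (by lia))) fun i => ?_
  exact hK ⟨f (i + 1), ⟨hmem _, hf i.succ_pos⟩, rfl⟩

theorem exists_not_hasOmegaPow_defectSet_inter_Iio (hA : HasChains A) (d : ℝ) :
    ∃ k, ¬HasOmegaPow k (defectSet A ∩ Set.Iio d) := by
  obtain ⟨K, hK⟩ := exists_image_defectToDyadic_subset hA d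
  refine ⟨K + 1, fun h => not_hasOmegaPow_succ_negDyadic K (.mono ?_ hK)⟩
  exact (HasOmegaPow.image_iff (defectToDyadic_strictMono.strictMonoOn _)).2 h

theorem setOrderType_eq_omega_pow_omega_of_subset_defectSet (hA : HasChains A) {S : Set ℝ}
    (hS : S ⊆ defectSet A) (hlower : ∀ k, HasOmegaPow k S) : setOrderType S = ω ^ ω := by
  refine setOrderType_eq_omega_pow_omega ((defectSet_isWF hA).mono hS) hlower fun d _ => ?_
  obtain ⟨k, hk⟩ := exists_not_hasOmegaPow_defectSet_inter_Iio hA d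
  exact ⟨k, fun h => hk (h.mono (Set.inter_subset_inter_left _ hS))⟩

theorem HasShortChains.exists_chainLength_eq_add (hA : HasShortChains A) (k : ℕ) :
    ∃ F : ℕ, ∀ l t j : ℕ, t ≤ 2 ^ l → binaryWeight t ≤ k →
      ∃ s < F, chainLength A (2 ^ j * (2 ^ l + t)) = l + j + s := by
  have hchains := hA.hasChains
  obtain ⟨f, hf⟩ := hA
  refine ⟨(Finset.range (k + 2)).sup f + 1, fun l t j ht hw => ?_⟩
  have hn : 0 < 2 ^ j * (2 ^ l + t) := by positivity
  have hlower : 2 ^ (l + j) ≤ 2 ^ j * (2 ^ l + t) := by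
    rw [add_comm, pow_add]
    gcongr
    lia
  have hupper : 2 ^ j * (2 ^ l + t) ≤ 2 ^ (l + j + 1) := by
    rw [show l + j + 1 = j + (l + 1) by lia, pow_add, pow_succ]
    gcongr
    lia
  have hweight : binaryWeight (2 ^ j * (2 ^ l + t)) < k + 2 := by
    have hadd := binaryWeight_two_pow_add_le l t
    rw [binaryWeight_two_pow_mul]
    lia
  obtain ⟨c, hcA, hc, hlen⟩ := hf _ hn
  have hlt := chainLength_lt_length hcA hc
  have hlog := Nat.log_mono_right (b := 2) hupper
  rw [Nat.log_pow one_lt_two] at hlog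
  have hsup := Finset.le_sup (f := f) (Finset.mem_range.2 hweight)
  obtain ⟨s, hs⟩ := Nat.exists_eq_add_of_le
    (le_chainLength_of_two_pow_le (hchains _ hn) hlower)
  exact ⟨s, by lia, hs⟩

theorem defectToDyadic_Adefect_sub {l t j s : ℕ}
    (hs : chainLength A (2 ^ j * (2 ^ l + t)) = l + j + s) :
    defectToDyadic (Adefect A (2 ^ j * (2 ^ l + t)) - s) = -(t / 2 ^ l) - 1 := by
  have hn : 0 < 2 ^ j * (2 ^ l + t) := by positivity
  have hdefect : Adefect A (2 ^ j * (2 ^ l + t)) - s =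
      ((l + j : ℕ) : ℝ) - logb 2 ((2 ^ j * (2 ^ l + t) : ℕ) : ℝ) := by
    rw [Adefect, hs]
    push_cast
    ring
  rw [hdefect, defectToDyadic_sub_logb hn]
  push_cast
  rw [pow_add]
  field_simp
  ring

-- Up to a bounded integer shift, the defect of `2 ^ j * (2 ^ l + t)` is determined by `t / 2 ^ l`;
-- indecomposability of `ω ^ k` lets a single shift account for a whole copy of `ω ^ k`.
theorem HasShortChains.hasOmegaPow_of_forall_exists (hA : HasShortChains A) {S : Set ℝ}
    (hS : ∀ n : ℕ, 0 < n → ∃ j : ℕ, Adefect A (2 ^ j * n) ∈ S) (k : ℕ) : HasOmegaPow k S := by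
  obtain ⟨F, hF⟩ := hA.exists_chainLength_eq_add k
  have hcover : (fun x => x - 1) '' negDyadic k ⊆
      ⋃ s ∈ Finset.range F, (fun d => defectToDyadic (d - s)) '' S := by
    rintro _ ⟨_, ⟨t, l, ht, hw, rfl⟩, rfl⟩
    obtain ⟨j, hj⟩ := hS (2 ^ l + t) (by positivity)
    obtain ⟨s, hsF, hs⟩ := hF l t j ht hw
    exact Set.mem_biUnion (Finset.mem_coe.2 (Finset.mem_range.2 hsF))
      ⟨_, hj, defectToDyadic_Adefect_sub hs⟩
  have hshift : HasOmegaPow k ((fun x => x - 1) '' negDyadic k) :=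
    (HasOmegaPow.image_iff fun _ _ _ _ hxy => sub_lt_sub_right hxy 1).2 (hasOmegaPow_negDyadic k)
  obtain ⟨s, -, hs⟩ := (hshift.mono hcover).exists_of_biUnion
  exact (HasOmegaPow.image_iff fun _ _ _ _ hxy =>
    defectToDyadic_strictMono (sub_lt_sub_right hxy _)).1 hs

theorem stableDefectSet_subset_defectSet (A : Set (List ℕ)) :
    stableDefectSet A ⊆ defectSet A := fun _ ⟨n, hn, _, hd⟩ => ⟨n, hn, hd⟩

end Defects

theorem Adefect_set_wellOrdered_orderType_omega_pow_omega_general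
    (A : Set (List ℕ)) (hA : HasShortChains A) :
    (defectSet A).IsWF ∧ setOrderType (defectSet A) = Ordinal.omega0 ^ Ordinal.omega0 ∧
    (stableDefectSet A).IsWF ∧
      ((∀ n : ℕ, 0 < n → chainLength A (2 * n) ≤ chainLength A n + 1) →
        setOrderType (stableDefectSet A) = Ordinal.omega0 ^ Ordinal.omega0) := by
  have hwf := defectSet_isWF hA.hasChains
  have hsub := stableDefectSet_subset_defectSet A
  refine ⟨hwf, ?_, hwf.mono hsub, fun hdouble => ?_⟩
  · exact setOrderType_eq_omega_pow_omega_of_subset_defectSet hA.hasChains subset_rfl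
      (hA.hasOmegaPow_of_forall_exists fun n hn => ⟨0, 2 ^ 0 * n, by positivity, rfl⟩)
  · refine setOrderType_eq_omega_pow_omega_of_subset_defectSet hA.hasChains hsub
      (hA.hasOmegaPow_of_forall_exists fun n hn => ?_)
    obtain ⟨j, hj⟩ := exists_aStable_two_pow_mul hA.hasChains hdouble hn
    exact ⟨j, 2 ^ j * n, by positivity, hj, rfl⟩

/-- For any admissible set `A` of addition chains, both `𝒟^A` and `𝒟^A_st` are
well-ordered subsets of `ℝ` of order type exactly `ω ^ ω`. -/
theorem Adefect_set_wellOrdered_orderType_omega_pow_omega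
    (A : Set (List ℕ)) (hA : Admissible A) :
    (defectSet A).IsWF ∧ setOrderType (defectSet A) = Ordinal.omega0 ^ Ordinal.omega0 ∧
    (stableDefectSet A).IsWF ∧
      setOrderType (stableDefectSet A) = Ordinal.omega0 ^ Ordinal.omega0 := by
  obtain ⟨hwf, htype, hwf', htype'⟩ :=
    Adefect_set_wellOrdered_orderType_omega_pow_omega_general A hA.hasShortChains
  exact ⟨hwf, htype, hwf', htype' hA.2⟩
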